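/- arXiv:2005.11703 — 2 statements merged into one kernel-verified Lean document; each statement's English description precedes it below -/
import Mathlib

section
/- For all integers n ≥ 1, m ≥ 3 and every partition λ of n, one has n · (P^{(m)}_{n,λ})'(1) = |C(λ)| · (n!)^{m−1} · (ℓ(λ) + (m−1)·Σ_{k=1}^{n} 1/k). Equivalently, since n · P^{(m)}_{n,λ}(1) = |C(λ)|·(n!)^{m−1}, the expected value of the random variable X^{(m)}_{n,λ} = (mn+1) − 2g on a uniformly random element of 𝓜_m(n,λ) equals ℓ(λ) + (m−1)·Σ_{k=1}^{n} 1/k. -/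
/-!
By definition `P'(1)` is the sum of the exponents `ℓ(λ) - 1 + cyc(σ₀) + ⋯ + cyc(σ_{m-1})` over
`𝓜_m(n, λ)`, and `cyc(σ₀) = 1` because `σ₀` is an `n`-cycle. Fix `φ` and `σ₀`. What remains are
the tuples `(σ₁, …, σ_{m-1})` whose product is a prescribed element. Since `m - 1 ≥ 2`, all but
one of the entries can be chosen freely, and so each single entry is uniformly distributed over
the symmetric group; hence the entries contribute `m - 1` times the total number of cycles of all
permutations, weighted by `(n!)^{m-3}` (`sum_sum_prod_eq`). The total number of cycles over the
symmetric group is `n! · ∑ 1/k` (`sum_cyc`): a permutation of `n + 1` points arises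
uniquely from a permutation of `n` points by inserting the new point either as a fixed point,
which creates one new cycle, or into an existing cycle, which creates none. Finally there are
`n!/n` choices of `σ₀` (`mul_card_full_cycles`).
-/

open Polynomial

/-- The number of cycles of a permutation of `{1, …, n}`, counting fixed points
(i.e. the number of orbits). -/
def cyc {n : ℕ} (σ : Equiv.Perm (Fin n)) : ℕ :=
  (Equiv.Perm.partition σ).parts.card

/-- The set `𝓜_m(n, λ)` of factorizations of the identity: tuples
`(φ, σ₀, (σ₁, …, σ_{m-1}))` of permutations of `{1, …, n}` with
`φ σ₀ σ₁ ⋯ σ_{m-1} = id`, where `φ` has cycle type `λ` and `σ₀` is an `n`-cycle. -/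
def Mset (m n : ℕ) (lam : n.Partition) :
    Finset (Equiv.Perm (Fin n) × Equiv.Perm (Fin n) × (Fin (m - 1) → Equiv.Perm (Fin n))) :=
  Finset.univ.filter fun p =>
    p.1 * p.2.1 * (List.ofFn p.2.2).prod = 1 ∧
    (Equiv.Perm.partition p.1).parts = lam.parts ∧
    (Equiv.Perm.partition p.2.1).parts = {n}

/-- `cyc(σ₀) + cyc(σ₁) + ⋯ + cyc(σ_{m-1})` for a tuple in `𝓜_m(n, λ)`. -/
def totCyc {m n : ℕ}
    (p : Equiv.Perm (Fin n) × Equiv.Perm (Fin n) × (Fin (m - 1) → Equiv.Perm (Fin n))) : ℕ :=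
  cyc p.2.1 + ∑ i, cyc (p.2.2 i)

/-- The polynomial `P^{(m)}_{n,λ}(t) = Σ_{𝓜_m(n,λ)} t^{ℓ(λ) - 1 + cyc(σ₀) + ⋯ + cyc(σ_{m-1})}`. -/
noncomputable def Ppoly (m n : ℕ) (lam : n.Partition) : Polynomial ℂ :=
  ∑ p ∈ Mset m n lam, X ^ (lam.parts.card - 1 + totCyc p)

/-- `|C(λ)|`: the number of permutations of `{1, …, n}` with cycle type `λ`. -/
def conjCard (n : ℕ) (lam : n.Partition) : ℕ :=
  (Finset.univ.filter fun σ : Equiv.Perm (Fin n) =>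
    (Equiv.Perm.partition σ).parts = lam.parts).card

/-- `H_{n,a}(t) = ∏_{k=-a}^{n-a-1} (t + k)`. -/
noncomputable def Hpoly (n a : ℕ) : Polynomial ℂ :=
  ∏ j ∈ Finset.range n, (X + C ((j : ℂ) - (a : ℂ)))

/-! ### The total number of cycles over the symmetric group -/

open Equiv Equiv.Perm in
/-- Splitting the point `x` off its cycle, by composing with the transposition of `x` and `f x`,
turns it into a fixed point and so increases the number of cycles by one. -/
lemma cyc_swap_mul {n : ℕ} (f : Perm (Fin n)) (x : Fin n) (hx : f x ≠ x) :
    cyc (swap x (f x) * f) = cyc f + 1 := by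
  classical
  have hmem : f.cycleOf x ∈ f.cycleFactorsFinset := by
    rw [cycleOf_mem_cycleFactorsFinset_iff]; exact mem_support.2 hx
  -- `f` is the disjoint product of the cycle `c` through `x` and the rest `r`
  obtain ⟨c, hc⟩ : ∃ c, c = f.cycleOf x := ⟨_, rfl⟩
  have hcx : c x = f x := by rw [hc, cycleOf_apply_self]
  have hcyc : c.IsCycle := hc ▸ isCycle_cycleOf f hx
  obtain ⟨r, hr⟩ : ∃ r, r = f * c⁻¹ := ⟨_, rfl⟩
  have hd : Disjoint r c := by
    rw [hr, hc]; exact disjoint_mul_inv_of_mem_cycleFactorsFinset hmem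
  have hf : f = c * r := by
    rw [← hd.commute.eq, hr, inv_mul_cancel_right]
  have hcx' : c x ≠ x := by rw [hcx]; exact hx
  have hn : f.support.card ≤ n := by simpa using f.support.card_le_univ
  have hsupp : f.support.card = c.support.card + r.support.card := by
    rw [hf]; exact hd.symm.card_support_mul
  have htype : f.cycleType.card = 1 + r.cycleType.card := by
    rw [hf, hd.symm.cycleType_mul, hcyc.cycleType]; simp [add_comm]
  simp only [cyc, parts_partition, Multiset.card_add, Multiset.card_replicate, Fintype.card_fin]
  by_cases h2 : c (c x) = x
  · have hsw : c = swap x (c x) := hcyc.eq_swap_of_apply_apply_eq_self hcx' h2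
    have hg : swap x (f x) * f = r := by
      rw [← hcx, ← hsw]
      conv_lhs => rw [hf, ← mul_assoc]
      nth_rewrite 1 [hsw]
      nth_rewrite 2 [hsw]
      simp
    have hc2 : c.support.card = 2 := by
      rw [hsw]; exact card_support_swap hcx'.symm
    rw [hg]; omega
  · have hcyc' := hcyc.swap_mul hcx' h2
    have hs' := support_swap_mul_eq c x h2
    have hd' : Disjoint (swap x (c x) * c) r := by
      rw [disjoint_iff_disjoint_support, hs']
      exact (disjoint_iff_disjoint_support.1 hd.symm).mono_left Finset.sdiff_subset
    have hg : swap x (f x) * f = (swap x (c x) * c) * r := by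
      rw [← hcx, mul_assoc, ← hf]
    have hxs : x ∈ c.support := mem_support.2 hcx'
    have hcard : (swap x (c x) * c).support.card = c.support.card - 1 := by
      rw [hs', Finset.card_sdiff_of_subset (by simpa using hcx')]; simp
    have hpos : 0 < c.support.card := Finset.card_pos.2 ⟨x, hxs⟩
    rw [hg, hd'.card_support_mul, hd'.cycleType_mul, hcyc'.cycleType]
    simp only [Multiset.card_add, Multiset.card_singleton]
    omega

open Equiv Equiv.Perm in
/-- Adding a new fixed point adds one cycle. -/
lemma cyc_decomposeFin_zero {n : ℕ} (e : Perm (Fin n)) :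
    cyc (decomposeFin.symm (0, e)) = cyc e + 1 := by
  have h : decomposeFin.symm (0, e) = e.extendDomain (finSuccAboveEquiv 0) := by
    ext1 i
    refine Fin.cases ?_ (fun j => ?_) i
    · rw [extendDomain_apply_not_subtype _ _ (by simp)]; simp
    · have := extendDomain_apply_image e (finSuccAboveEquiv (0 : Fin (n + 1))) j
      rw [finSuccAboveEquiv_apply, finSuccAboveEquiv_apply] at this
      simpa only [Fin.zero_succAbove, decomposeFin_symm_apply_succ, swap_self, refl_apply]
        using this.symm
  have hn : e.support.card ≤ n := by simpa using e.support.card_le_univ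
  simp only [cyc, parts_partition, Multiset.card_add, Multiset.card_replicate, Fintype.card_fin]
  rw [h, cycleType_extendDomain, card_support_extend_domain]
  omega

open Equiv Equiv.Perm in
lemma cyc_decomposeFin {n : ℕ} (p : Fin (n + 1)) (e : Perm (Fin n)) :
    cyc (decomposeFin.symm (p, e)) = cyc e + if p = 0 then 1 else 0 := by
  split_ifs with hp
  · rw [hp, cyc_decomposeFin_zero]
  · have h0 : decomposeFin.symm (p, e) 0 = p := decomposeFin_symm_apply_zero p e
    have h := cyc_swap_mul (decomposeFin.symm (p, e)) 0 (by rw [h0]; exact hp)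
    have h1 : swap 0 p * decomposeFin.symm (p, e) = decomposeFin.symm (0, e) := by
      ext1 i
      refine Fin.cases ?_ (fun j => ?_) i <;> simp
    rw [h0, h1, cyc_decomposeFin_zero] at h
    omega

/-- The average number of cycles of a permutation of `n` points is the harmonic number `H_n`. -/
lemma sum_cyc (n : ℕ) :
    ∑ σ : Equiv.Perm (Fin n), (cyc σ : ℂ) =
      (n.factorial : ℂ) * ∑ k ∈ Finset.Icc 1 n, ((k : ℂ))⁻¹ := by
  induction n with
  | zero => simp [cyc, Equiv.Perm.parts_partition]
  | succ n ih =>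
    rw [← Equiv.Perm.decomposeFin.symm.sum_comp, Fintype.sum_prod_type]
    simp only [cyc_decomposeFin, Nat.cast_add, Finset.sum_add_distrib, ih]
    have hn : (n : ℂ) + 1 ≠ 0 := by exact_mod_cast n.succ_ne_zero
    rw [Finset.sum_Icc_succ_top (by omega)]
    simp [Fintype.card_perm, Nat.factorial_succ, Finset.sum_ite_eq']
    field_simp

/-! ### Tuples in a finite group with prescribed product -/

/-- The last entry of a tuple with prescribed product is determined by the others. -/
lemma card_prod_eq {G : Type*} [Group G] [Fintype G] [DecidableEq G] (k : ℕ) (g : G) :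
    ∑ f : Fin (k + 1) → G, (if (List.ofFn f).prod = g then (1 : ℂ) else 0) =
      (Fintype.card G : ℂ) ^ k := by
  induction k generalizing g with
  | zero =>
    rw [← (Equiv.funUnique (Fin 1) G).symm.sum_comp]
    simp
  | succ k ih =>
    rw [← (Fin.consEquiv fun _ => G).sum_comp, Fintype.sum_prod_type]
    have h : ∀ (x : G) (f : Fin (k + 1) → G),
        (List.ofFn (Fin.consEquiv (fun _ => G) (x, f))).prod = g ↔
          (List.ofFn f).prod = x⁻¹ * g := by
      intro x f
      rw [eq_inv_mul_iff_mul_eq, ← List.prod_cons, ← List.ofFn_cons]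
      rfl
    simp only [h, ih]
    simp [pow_succ']

/-- In a uniformly random tuple of at least two group elements with prescribed product every entry
is uniformly distributed, so that the expectation of `∑ F (f i)` is that for independent entries. -/
lemma sum_sum_prod_eq {G : Type*} [Group G] [Fintype G] [DecidableEq G] (F : G → ℂ) (k : ℕ)
    (g : G) :
    ∑ f : Fin (k + 2) → G, (if (List.ofFn f).prod = g then ∑ i, F (f i) else 0) =
      ((k : ℂ) + 2) * (Fintype.card G : ℂ) ^ k * ∑ x, F x := by
  have step : ∀ (k : ℕ) (g : G),
      ∑ f : Fin (k + 2) → G, (if (List.ofFn f).prod = g then ∑ i, F (f i) else 0) =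
      (Fintype.card G : ℂ) ^ k * ∑ x, F x +
        ∑ x, ∑ f : Fin (k + 1) → G,
          (if (List.ofFn f).prod = x⁻¹ * g then ∑ i, F (f i) else 0) := by
    intro k g
    rw [← (Fin.consEquiv fun _ => G).sum_comp, Fintype.sum_prod_type, Finset.mul_sum,
      ← Finset.sum_add_distrib]
    refine Finset.sum_congr rfl fun x _ => ?_
    rw [← card_prod_eq k (x⁻¹ * g), Finset.sum_mul, ← Finset.sum_add_distrib]
    refine Finset.sum_congr rfl fun f _ => ?_
    have h : (List.ofFn (Fin.consEquiv (fun _ => G) (x, f))).prod = g ↔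
        (List.ofFn f).prod = x⁻¹ * g := by
      rw [eq_inv_mul_iff_mul_eq, ← List.prod_cons, ← List.ofFn_cons]
      rfl
    simp only [h]
    rw [Fin.sum_univ_succ]
    split_ifs <;> simp
  induction k generalizing g with
  | zero =>
    rw [step]
    have h1 : ∀ y : G, ∑ f : Fin (0 + 1) → G,
        (if (List.ofFn f).prod = y then ∑ i, F (f i) else 0) = F y := by
      intro y
      rw [← (Equiv.funUnique (Fin 1) G).symm.sum_comp]
      simp
    have h2 : ∑ x : G, F (x⁻¹ * g) = ∑ x, F x :=
      ((Equiv.inv G).trans (Equiv.mulRight g)).sum_comp F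
    simp only [h1, h2]
    push_cast
    ring
  | succ k ih =>
    rw [step]
    simp only [ih]
    simp
    ring

/-! ### The number of full cycles and the expectation formula -/

open Equiv.Perm in
/-- There are `n!/n` full cycles. -/
lemma mul_card_full_cycles (n : ℕ) (hn : 1 ≤ n) :
    n * (Finset.univ.filter fun σ : Equiv.Perm (Fin n) =>
      (Equiv.Perm.partition σ).parts = {n}).card = n.factorial := by
  -- a fixed point is not recorded in the cycle type, so `n = 1` is separate
  obtain rfl | hn2 : n = 1 ∨ 2 ≤ n := by omega
  · rw [Finset.filter_true_of_mem]
    · simp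
    · intro σ _
      rw [Subsingleton.elim σ 1, parts_partition]
      simp
  · have h : ∀ σ : Equiv.Perm (Fin n), (Equiv.Perm.partition σ).parts = {n} ↔
        σ.cycleType = {n} := by
      intro σ
      constructor
      · intro h
        rw [← filter_parts_partition_eq_cycleType, h]
        simp [Multiset.filter_singleton, hn2]
      · intro h
        have hs : σ.support.card = n := by rw [← sum_cycleType, h]; simp
        rw [parts_partition, h, hs]
        simp
    simp only [h]
    rw [card_of_cycleType_singleton hn2 (by simp)]
    simp [Nat.mul_factorial_pred (by omega : n ≠ 0)]

/-- `n · (P^{(m)}_{n,λ})'(1) = |C(λ)| (n!)^{m-1} (ℓ(λ) + (m-1) Σ_{k=1}^n 1/k)`: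
the expectation formula for `X^{(m)}_{n,λ}`. -/
theorem P_deriv_at_one (n m : ℕ) (hn : 1 ≤ n) (hm : 3 ≤ m) (lam : n.Partition) :
    (n : ℂ) * (derivative (Ppoly m n lam)).eval 1 =
      (conjCard n lam : ℂ) * (n.factorial : ℂ) ^ (m - 1) *
        ((lam.parts.card : ℂ) + ((m : ℂ) - 1) * ∑ k ∈ Finset.Icc 1 n, ((k : ℂ))⁻¹) := by
  have hl : 1 ≤ lam.parts.card := by
    rw [Nat.one_le_iff_ne_zero]
    intro h
    have := lam.parts_sum
    rw [Multiset.card_eq_zero.1 h] at this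
    simp at this
    omega
  have hder : (derivative (Ppoly m n lam)).eval 1 =
      ∑ p ∈ Mset m n lam, ((lam.parts.card : ℂ) + ∑ i, (cyc (p.2.2 i) : ℂ)) := by
    simp only [Ppoly, derivative_sum, eval_finsetSum]
    refine Finset.sum_congr rfl fun p hp => ?_
    have h0 : cyc p.2.1 = 1 := by
      rw [cyc, (Finset.mem_filter.1 hp).2.2.2]; simp
    have hexp : lam.parts.card - 1 + totCyc p = lam.parts.card + ∑ i, cyc (p.2.2 i) := by
      rw [totCyc, h0]; omega
    rw [hexp]
    simp [derivative_X_pow, eval_finsetSum]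
  obtain ⟨k, rfl⟩ : ∃ k, m = k + 3 := ⟨m - 3, by omega⟩
  -- for fixed `φ` and `σ₀`, the sum over the remaining entries does not depend on `φ` and `σ₀`
  have hinner : ∀ a : Equiv.Perm (Fin n),
      ∑ f : Fin (k + 2) → Equiv.Perm (Fin n), (if a * (List.ofFn f).prod = 1 then
        ((lam.parts.card : ℂ) + ∑ i, (cyc (f i) : ℂ)) else 0) =
      (n.factorial : ℂ) ^ (k + 1) *
        ((lam.parts.card : ℂ) + ((k : ℂ) + 2) * ∑ k ∈ Finset.Icc 1 n, ((k : ℂ))⁻¹) := by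
    intro a
    have h1 := card_prod_eq (k + 1) a⁻¹
    have h2 := sum_sum_prod_eq (fun σ : Equiv.Perm (Fin n) => (cyc σ : ℂ)) k a⁻¹
    rw [sum_cyc] at h2
    simp only [Fintype.card_perm, Fintype.card_fin] at h1 h2
    have h3 : ∀ f : Fin (k + 2) → Equiv.Perm (Fin n), (if a * (List.ofFn f).prod = 1 then
        ((lam.parts.card : ℂ) + ∑ i, (cyc (f i) : ℂ)) else 0) =
        (lam.parts.card : ℂ) * (if (List.ofFn f).prod = a⁻¹ then 1 else 0) +
        (if (List.ofFn f).prod = a⁻¹ then ∑ i, (cyc (f i) : ℂ) else 0) := by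
      intro f
      simp only [mul_eq_one_iff_eq_inv', mul_ite, mul_one, mul_zero]
      split_ifs <;> simp
    rw [Finset.sum_congr rfl fun f _ => h3 f, Finset.sum_add_distrib, ← Finset.mul_sum, h1, h2]
    ring
  have hsum : ∑ p ∈ Mset (k + 3) n lam, ((lam.parts.card : ℂ) + ∑ i, (cyc (p.2.2 i) : ℂ)) =
      ∑ φ ∈ Finset.univ.filter (fun σ : Equiv.Perm (Fin n) =>
          (Equiv.Perm.partition σ).parts = lam.parts),
        ∑ σ₀ ∈ Finset.univ.filter (fun σ : Equiv.Perm (Fin n) =>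
          (Equiv.Perm.partition σ).parts = {n}),
          ∑ f : Fin (k + 2) → Equiv.Perm (Fin n), (if φ * σ₀ * (List.ofFn f).prod = 1 then
            ((lam.parts.card : ℂ) + ∑ i, (cyc (f i) : ℂ)) else 0) := by
    rw [Mset, Finset.sum_filter, Fintype.sum_prod_type, Finset.sum_filter]
    refine Finset.sum_congr rfl fun φ _ => ?_
    rw [Fintype.sum_prod_type, Finset.sum_filter]
    by_cases hφ : (Equiv.Perm.partition φ).parts = lam.parts
    · rw [if_pos hφ]
      refine Finset.sum_congr rfl fun σ₀ _ => ?_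
      by_cases hσ : (Equiv.Perm.partition σ₀).parts = {n}
      · simp only [hφ, hσ, and_true, if_true]
        rfl
      · simp [hσ]
    · simp [hφ]
  rw [hder, hsum]
  simp only [hinner, Finset.sum_const, nsmul_eq_mul]
  have hc := mul_card_full_cycles n hn
  have hc' : (n : ℂ) * ((Finset.univ.filter fun σ : Equiv.Perm (Fin n) =>
      (Equiv.Perm.partition σ).parts = {n}).card : ℂ) = (n.factorial : ℂ) := by
    exact_mod_cast hc
  have hm1 : k + 3 - 1 = k + 2 := rfl
  rw [conjCard, hm1, pow_succ _ (k + 1)]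
  nth_rewrite 3 [← hc']
  push_cast
  ring
end

section
/- For all integers n ≥ 1, m ≥ 4 and every partition λ of n, writing P = P^{(m)}_{n,λ} and E = P'(1)/P(1), one has P''(1)/P(1) + E − E² = (m−1)·Σ_{k=1}^{n} (1/k − 1/k²). Equivalently, the variance of the random variable X^{(m)}_{n,λ} = (mn+1) − 2g on a uniformly random element of 𝓜_m(n,λ) equals (m−1)·Σ_{k=1}^{n} (1/k − 1/k²). -/
/-! Once `φ` and `σ₀` are fixed, `(σ₁, …, σ_{m-1})` is a uniformly random factorization of a fixed
permutation into `m - 1 ≥ 3` factors, and any two of the factors are independent and uniform on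
the symmetric group. The exponent is `ℓ(λ) + ∑ cyc(σ_i)`, a constant plus pairwise uncorrelated
terms, so its variance is `m - 1` times the variance of the cycle count of a uniform permutation.

This is carried out with generating functions. By `factSum_eq`, the weighted number of
factorizations of `g` into `N` factors agrees, up to order `N` at `t = 1`, with
`(∑_σ t^{cyc σ})^N / n!`, independently of `g`. Hence (`Ppoly_eq`) the polynomial `P` agrees, up to
order three at `t = 1`, with a nonzero multiple of `t^{ℓ(λ)} H(t)^{m-1}`, where
`H(t) = ∑_σ t^{cyc σ} = t (t + 1) ⋯ (t + n - 1)` (`sum_X_pow_cyc`). The variance is additive on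
products (`genVar_mul`), and the factor `t + k - 1` of `H` contributes `1/k - 1/k²`. -/

open Polynomial

/-! ### Cycle counts and the generating function of the symmetric group -/

open Equiv Equiv.Perm in
/-- Multiplying `τ` by the transposition `(x τ(x))` detaches the moved point `x` from its cycle,
which creates exactly one new cycle. -/
lemma cycleCount_swap_mul {α : Type*} [Fintype α] [DecidableEq α] (τ : Perm α) (x : α)
    (hx : τ x ≠ x) :
    (partition (swap x (τ x) * τ)).parts.card = (partition τ).parts.card + 1 := by
  set c := τ.cycleOf x with hc
  have hcyc : c.IsCycle := isCycle_cycleOf τ hx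
  have hcx : c x = τ x := cycleOf_apply_self τ x
  have hdis : Disjoint c (τ * c⁻¹) := (disjoint_mul_inv_of_mem_cycleFactorsFinset
    (cycleOf_mem_cycleFactorsFinset_iff.2 (mem_support.2 hx))).symm
  have hτ : τ = c * (τ * c⁻¹) := by
    rw [hdis.commute.eq]; simp
  set d := τ * c⁻¹ with hd
  have hsw : swap x (τ x) * τ = (swap x (c x) * c) * d := by
    rw [hcx, mul_assoc, ← hτ]
  have hcard : (swap x (c x) * c).cycleType.card + c.support.card =
      c.cycleType.card + (swap x (c x) * c).support.card + 1 := by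
    by_cases h : c (c x) = x
    · have h2 : c = swap x (c x) :=
        hcyc.eq_swap_of_apply_apply_eq_self (by rwa [hcx]) h
      have h1 : swap x (c x) * c = 1 := by
        nth_rewrite 2 [h2]
        simp
      have h3 : c.support.card = 2 := by
        rw [h2]; exact card_support_swap (by rw [hcx]; exact hx.symm)
      rw [h1, hcyc.cycleType, h3]
      simp
    · have h4 := hcyc.swap_mul (x := x) (by rwa [hcx]) h
      have h5 : (swap x (c x) * c).support.card + 1 = c.support.card := by
        rw [support_swap_mul_eq _ _ h, Finset.sdiff_singleton_eq_erase]
        exact Finset.card_erase_add_one (mem_support.2 (by rwa [hcx]))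
      rw [hcyc.cycleType, h4.cycleType]
      simp only [Multiset.card_singleton]
      omega
  have hdis' : Disjoint (swap x (c x) * c) d := by
    intro y
    rcases hdis y with h | h
    · by_cases hyd : d y = y
      · exact Or.inr hyd
      · left
        have h6 : y ≠ x := by rintro rfl; exact hx (hcx ▸ h)
        have h7 : y ≠ c x := by
          intro h8
          apply h6
          apply c.injective
          rw [h, h8]
        rw [Perm.mul_apply, h, swap_apply_of_ne_of_ne h6 h7]
    · exact Or.inr h
  have hle1 := Finset.card_le_univ ((swap x (c x) * c) * d).support
  have hle2 := Finset.card_le_univ (c * d).support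
  rw [hsw]
  rw [hτ]
  simp only [parts_partition, Multiset.card_add, Multiset.card_replicate]
  rw [hdis'.card_support_mul] at *
  rw [hdis.card_support_mul] at *
  rw [hdis'.cycleType_mul, hdis.cycleType_mul]
  simp only [Multiset.card_add]
  omega

open Equiv Equiv.Perm in
/-- Inserting a new point into an existing cycle does not change the number of cycles. -/
lemma cyc_decomposeFin_succ {n : ℕ} (p : Fin n) (e : Perm (Fin n)) :
    cyc (decomposeFin.symm (p.succ, e)) = cyc e := by
  set τ := decomposeFin.symm (p.succ, e) with hτ
  have h0 : τ 0 = p.succ := decomposeFin_symm_apply_zero _ _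
  have h1 : swap 0 (τ 0) * τ = decomposeFin.symm (0, e) := by
    ext i
    refine Fin.cases ?_ (fun j => ?_) i
    · simp [h0]
    · rw [Perm.mul_apply, h0, hτ, decomposeFin_symm_apply_succ, decomposeFin_symm_apply_succ]
      simp
  have h2 := cycleCount_swap_mul τ 0 (by rw [h0]; exact Fin.succ_ne_zero p)
  rw [h1] at h2
  have h3 := cyc_decomposeFin_zero e
  unfold cyc at *
  omega

/-- `∑_σ t^{cyc σ} = t (t + 1) ⋯ (t + n - 1)`. -/
lemma sum_X_pow_cyc (n : ℕ) :
    ∑ σ : Equiv.Perm (Fin n), (X : ℂ[X]) ^ cyc σ = ∏ j ∈ Finset.range n, (X + C (j : ℂ)) := by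
  induction n with
  | zero =>
    have : ∀ σ : Equiv.Perm (Fin 0), cyc σ = 0 := by decide
    simp [this]
  | succ n ih =>
    rw [Finset.prod_range_succ, ← ih,
      ← Equiv.sum_comp Equiv.Perm.decomposeFin.symm, Fintype.sum_prod_type, Fin.sum_univ_succ]
    simp only [cyc_decomposeFin_zero, cyc_decomposeFin_succ, pow_succ, ← Finset.sum_mul]
    simp
    ring

/-! ### Factorizations in a finite group -/

/-- The weighted number of factorizations `g = f₀ f₁ ⋯ f_{N-1}` in a finite group, each
factorization being weighted by `∏ w(f_i)`. -/
noncomputable def factSum {G : Type*} [Group G] [Fintype G] [DecidableEq G] (w : G → ℂ[X])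
    (N : ℕ) (g : G) : ℂ[X] :=
  ∑ f : Fin N → G, if (List.ofFn f).prod = g then ∏ i, w (f i) else 0

lemma factSum_succ {G : Type*} [Group G] [Fintype G] [DecidableEq G] (w : G → ℂ[X])
    (N : ℕ) (g : G) : factSum w (N + 1) g = ∑ x, w x * factSum w N (x⁻¹ * g) := by
  unfold factSum
  rw [← Equiv.sum_comp (Fin.consEquiv fun _ => G), Fintype.sum_prod_type]
  refine Finset.sum_congr rfl fun x _ => ?_
  rw [Finset.mul_sum]
  refine Finset.sum_congr rfl fun f _ => ?_
  simp [Fin.consEquiv, List.ofFn_succ, Fin.prod_univ_succ, eq_inv_mul_iff_mul_eq]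

lemma sum_factSum {G : Type*} [Group G] [Fintype G] [DecidableEq G] (w : G → ℂ[X]) (N : ℕ) :
    ∑ g, factSum w N g = (∑ g, w g) ^ N := by
  unfold factSum
  rw [Finset.sum_comm]
  simp [Finset.sum_pow']

/-- If all weights equal `1` at `t = 1`, then up to order `N` at `t = 1` the weighted number of
factorizations of `g` into `N` factors does not depend on `g`. This is the algebraic form of the
fact that any `N - 1` of the factors are independent and uniform. -/
lemma factSum_eq {G : Type*} [Group G] [Fintype G] [DecidableEq G] (w : G → ℂ[X])
    (hw : ∀ g, (w g).eval 1 = 1) (N : ℕ) :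
    ∃ B : G → ℂ[X], ∀ g, factSum w N g =
      C ((Fintype.card G : ℂ)⁻¹) * (∑ x, w x) ^ N + (X - C 1) ^ N * B g := by
  have hG : (Fintype.card G : ℂ) ≠ 0 := Nat.cast_ne_zero.2 Fintype.card_ne_zero
  induction N with
  | zero => exact ⟨fun g => factSum w 0 g - C ((Fintype.card G : ℂ)⁻¹), fun g => by simp⟩
  | succ N ih =>
    obtain ⟨B, hB⟩ := ih
    -- Summing over `g` shows that the error terms of order exactly `N` cancel.
    have hsum : ∑ g, B g = 0 := by
      have h := sum_factSum w N
      simp only [hB, Finset.sum_add_distrib, Finset.sum_const, ← Finset.mul_sum,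
        Finset.card_univ, nsmul_eq_mul] at h
      rw [← mul_assoc, ← C_eq_natCast, ← C_mul, mul_inv_cancel₀ hG, C_1, one_mul,
        add_eq_left] at h
      exact (mul_eq_zero.1 h).resolve_left (pow_ne_zero _ (X_sub_C_ne_zero 1))
    have hdvd : ∀ g, (X - C 1 : ℂ[X]) ∣ ∑ x, w x * B (x⁻¹ * g) := by
      intro g
      rw [dvd_iff_isRoot, IsRoot.def, eval_finsetSum]
      simp only [eval_mul, hw, one_mul]
      rw [← eval_finsetSum]
      have : ∑ x, B (x⁻¹ * g) = ∑ x, B x :=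
        Equiv.sum_comp ((Equiv.inv G).trans (Equiv.mulRight g)) B
      rw [this, hsum, eval_zero]
    choose D hD using hdvd
    refine ⟨D, fun g => ?_⟩
    rw [factSum_succ]
    simp only [hB, mul_add, Finset.sum_add_distrib, ← Finset.sum_mul]
    have : ∑ x, w x * ((X - C 1) ^ N * B (x⁻¹ * g)) =
        (X - C 1) ^ N * ∑ x, w x * B (x⁻¹ * g) := by
      rw [Finset.mul_sum]
      exact Finset.sum_congr rfl fun x _ => by ring
    rw [this, hD]
    ring

/-! ### The variance functional -/

/-- The variance of the distribution whose generating function is proportional to `Q`. -/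
noncomputable def genVar (Q : ℂ[X]) : ℂ :=
  (derivative (derivative Q)).eval 1 / Q.eval 1 + (derivative Q).eval 1 / Q.eval 1
    - ((derivative Q).eval 1 / Q.eval 1) ^ 2

/-- Variances of independent variables add up. -/
lemma genVar_mul {Q R : ℂ[X]} (hQ : Q.eval 1 ≠ 0) (hR : R.eval 1 ≠ 0) :
    genVar (Q * R) = genVar Q + genVar R := by
  unfold genVar
  simp only [derivative_mul, derivative_add, eval_add, eval_mul]
  field_simp
  ring

lemma genVar_C (c : ℂ) : genVar (C c) = 0 := by simp [genVar]

lemma genVar_X : genVar X = 0 := by simp [genVar]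

lemma genVar_pow {Q : ℂ[X]} (hQ : Q.eval 1 ≠ 0) (k : ℕ) : genVar (Q ^ k) = k * genVar Q := by
  induction k with
  | zero => simpa using genVar_C 1
  | succ k ih =>
    rw [pow_succ, genVar_mul (by simpa using pow_ne_zero k hQ) hQ, ih]
    push_cast
    ring

/-- The variance only depends on the generating function up to order three at `t = 1`. -/
lemma genVar_add_cube (Q B : ℂ[X]) : genVar (Q + (X - C 1) ^ 3 * B) = genVar Q := by
  simp [genVar, derivative_pow]

lemma eval_factor_ne_zero (j : ℕ) : (X + C (j : ℂ)).eval 1 ≠ 0 := by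
  simp only [eval_add, eval_X, eval_C]
  norm_cast
  omega

lemma eval_rising_ne_zero (n : ℕ) :
    (∏ j ∈ Finset.range n, (X + C (j : ℂ))).eval 1 ≠ 0 := by
  rw [eval_prod]
  exact Finset.prod_ne_zero_iff.2 fun j _ => eval_factor_ne_zero j

/-- The variance of the number of cycles of a uniformly random permutation. -/
lemma genVar_rising (n : ℕ) : genVar (∏ j ∈ Finset.range n, (X + C (j : ℂ))) =
    ∑ k ∈ Finset.Icc 1 n, (((k : ℂ))⁻¹ - ((k : ℂ) ^ 2)⁻¹) := by
  induction n with
  | zero => simpa using genVar_C 1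
  | succ n ih =>
    have h : genVar (X + C (n : ℂ)) = ((n + 1 : ℕ) : ℂ)⁻¹ - (((n + 1 : ℕ) : ℂ) ^ 2)⁻¹ := by
      simp [genVar, add_comm]
    rw [Finset.prod_range_succ, genVar_mul (eval_rising_ne_zero n) (eval_factor_ne_zero n), ih,
      Finset.sum_Icc_succ_top (Nat.le_add_left 1 n), h]

/-! ### The polynomial of the theorem -/

open Equiv.Perm in
/-- Every partition of `n` is a cycle type. -/
lemma exists_partition_eq {n : ℕ} (lam : n.Partition) :
    ∃ σ : Equiv.Perm (Fin n), (partition σ).parts = lam.parts := by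
  have hsplit : lam.parts =
      lam.parts.filter (2 ≤ ·) + Multiset.replicate (lam.parts.filter (¬ 2 ≤ ·)).card 1 := by
    conv_lhs => rw [← Multiset.filter_add_not (2 ≤ ·) lam.parts]
    congr 1
    refine Multiset.eq_replicate_card.2 fun b hb => ?_
    rw [Multiset.mem_filter] at hb
    have := lam.parts_pos hb.1
    omega
  have hsum := lam.parts_sum
  rw [hsplit, Multiset.sum_add, Multiset.sum_replicate, smul_eq_mul, mul_one] at hsum
  obtain ⟨σ, hσ⟩ := (exists_with_cycleType_iff (Fin n) (m := lam.parts.filter (2 ≤ ·))).2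
    ⟨by rw [Fintype.card_fin]; omega, fun a ha => (Multiset.mem_filter.1 ha).2⟩
  refine ⟨σ, ?_⟩
  rw [hsplit, parts_partition, hσ, ← sum_cycleType, hσ, Fintype.card_fin]
  congr 2
  omega

/-- Summing over `φ` and `σ₀` first reduces `P^{(m)}_{n,λ}` to counting factorizations of
`(φ σ₀)⁻¹`; the factor `t^{cyc σ₀} = t` cancels the `-1` in the exponent. -/
lemma Ppoly_eq_sum_factSum (m n : ℕ) (lam : n.Partition) (hlen : 1 ≤ lam.parts.card) :
    Ppoly m n lam =
      ∑ φ ∈ Finset.univ.filter fun σ : Equiv.Perm (Fin n) =>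
          (Equiv.Perm.partition σ).parts = lam.parts,
        ∑ σ ∈ Finset.univ.filter fun σ : Equiv.Perm (Fin n) =>
            (Equiv.Perm.partition σ).parts = {n},
          X ^ lam.parts.card *
            factSum (fun σ : Equiv.Perm (Fin n) => (X : ℂ[X]) ^ cyc σ) (m - 1) (φ * σ)⁻¹ := by
  unfold Ppoly Mset factSum
  rw [Finset.sum_filter, Fintype.sum_prod_type, Finset.sum_filter]
  refine Finset.sum_congr rfl fun φ _ => ?_
  rw [Fintype.sum_prod_type]
  split_ifs with hφ
  · rw [Finset.sum_filter]
    refine Finset.sum_congr rfl fun σ _ => ?_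
    split_ifs with hσ
    · rw [Finset.mul_sum]
      refine Finset.sum_congr rfl fun f _ => ?_
      simp only [hφ, hσ, and_true, mul_eq_one_iff_inv_eq, eq_comm (a := (φ * σ)⁻¹)]
      split_ifs with hf
      · have hc : cyc σ = 1 := by rw [cyc, hσ, Multiset.card_singleton]
        rw [totCyc, hc, Finset.prod_pow_eq_pow_sum, ← pow_add]
        congr 1
        dsimp only
        omega
      · simp
    · simp [hσ]
  · simp [hφ]

/-- Up to order `m - 1` at `t = 1`, the polynomial `P^{(m)}_{n,λ}` is a nonzero constant times
`t^{ℓ(λ)} (t (t + 1) ⋯ (t + n - 1))^{m-1}`. -/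
lemma Ppoly_eq (n m : ℕ) (hn : 1 ≤ n) (lam : n.Partition) :
    ∃ (c : ℂ) (B : ℂ[X]), c ≠ 0 ∧ Ppoly m n lam =
      C c * X ^ lam.parts.card * (∏ j ∈ Finset.range n, (X + C (j : ℂ))) ^ (m - 1)
        + (X - C 1) ^ (m - 1) * B := by
  obtain ⟨B, hB⟩ := factSum_eq (fun σ : Equiv.Perm (Fin n) => (X : ℂ[X]) ^ cyc σ)
    (fun σ => by simp) (m - 1)
  have hcard : (Fintype.card (Equiv.Perm (Fin n)) : ℂ) ≠ 0 :=
    Nat.cast_ne_zero.2 Fintype.card_ne_zero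
  set S := Finset.univ.filter fun σ : Equiv.Perm (Fin n) =>
    (Equiv.Perm.partition σ).parts = lam.parts with hS
  set T := Finset.univ.filter fun σ : Equiv.Perm (Fin n) =>
    (Equiv.Perm.partition σ).parts = {n} with hT
  have hS0 : (S.card : ℂ) ≠ 0 := by
    obtain ⟨σ, hσ⟩ := exists_partition_eq lam
    exact Nat.cast_ne_zero.2 (Finset.card_ne_zero_of_mem (Finset.mem_filter.2
      ⟨Finset.mem_univ σ, hσ⟩))
  have hT0 : (T.card : ℂ) ≠ 0 := by
    obtain ⟨σ, hσ⟩ := exists_partition_eq (Nat.Partition.indiscrete n)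
    rw [Nat.Partition.indiscrete_parts (by omega)] at hσ
    exact Nat.cast_ne_zero.2 (Finset.card_ne_zero_of_mem (Finset.mem_filter.2
      ⟨Finset.mem_univ σ, hσ⟩))
  have hlen : 1 ≤ lam.parts.card := by
    rw [Nat.one_le_iff_ne_zero, Ne, Multiset.card_eq_zero]
    intro h
    have := lam.parts_sum
    rw [h, Multiset.sum_zero] at this
    omega
  have hP := Ppoly_eq_sum_factSum m n lam hlen
  rw [← hS, ← hT] at hP
  refine ⟨S.card * (T.card * (Fintype.card (Equiv.Perm (Fin n)) : ℂ)⁻¹),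
    ∑ φ ∈ S, ∑ σ ∈ T, X ^ lam.parts.card * B (φ * σ)⁻¹,
    mul_ne_zero hS0 (mul_ne_zero hT0 (inv_ne_zero hcard)), ?_⟩
  rw [hP]
  simp only [hB, sum_X_pow_cyc, mul_add, Finset.sum_add_distrib, Finset.sum_const, nsmul_eq_mul,
    Finset.mul_sum, C_mul, C_eq_natCast]
  refine congrArg₂ (· + ·) ?_ ?_
  · ring
  · exact Finset.sum_congr rfl fun φ _ => Finset.sum_congr rfl fun σ _ => by ring

/-- For `m ≥ 4`, the variance of `X^{(m)}_{n,λ}`: with `P = P^{(m)}_{n,λ}` and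
`E = P'(1)/P(1)`, one has `P''(1)/P(1) + E - E² = (m-1) Σ_{k=1}^n (1/k - 1/k²)`. -/
theorem variance_formula_large_m (n m : ℕ) (hn : 1 ≤ n) (hm : 4 ≤ m) (lam : n.Partition) :
    (derivative (derivative (Ppoly m n lam))).eval 1 / (Ppoly m n lam).eval 1
        + (derivative (Ppoly m n lam)).eval 1 / (Ppoly m n lam).eval 1
        - ((derivative (Ppoly m n lam)).eval 1 / (Ppoly m n lam).eval 1) ^ 2 =
      ((m : ℂ) - 1) * ∑ k ∈ Finset.Icc 1 n, (((k : ℂ))⁻¹ - ((k : ℂ) ^ 2)⁻¹) := by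
  obtain ⟨c, B, hc, hP⟩ := Ppoly_eq n m hn lam
  change genVar (Ppoly m n lam) = _
  have hsplit : (X - C 1 : ℂ[X]) ^ (m - 1) * B = (X - C 1) ^ 3 * ((X - C 1) ^ (m - 4) * B) := by
    rw [← mul_assoc, ← pow_add]
    congr 2
    omega
  have hX : (X : ℂ[X]).eval 1 ≠ 0 := by simp
  rw [hP, hsplit, genVar_add_cube, genVar_mul, genVar_mul, genVar_C, genVar_pow hX, genVar_X,
    genVar_pow (eval_rising_ne_zero n), genVar_rising, Nat.cast_sub (by omega)]
  · simp
  · simpa using hc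
  · simp
  · simpa using hc
  · rw [eval_pow]
    exact pow_ne_zero _ (eval_rising_ne_zero n)
end
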